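/- arXiv:1405.0652 — 15 statements merged into one kernel-verified Lean document; each statement's English description precedes it below -/
import Mathlib

section
/- Let 0 < s < 1 and let f : [0,∞) → ℝ be s-convex in the first sense. Then f is non-decreasing on (0,∞); that is, for all u, v with 0 < u ≤ v one has f(u) ≤ f(v). -/
/-!
Taking both points equal to `u` in the definition, with `λ₁ = a^(1/s)` and `λ₂ = (1 - a)^(1/s)`,
gives `f (h a * u) ≤ f u` where `h a = a^(1/s) + (1 - a)^(1/s)`. Since `1/s > 1`, the value
`c = h (1/2) = 2 * (1/2)^(1/s)` lies in `(0, 1)`, while `h 1 = 1`; by the intermediate value theorem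
`f (t * u) ≤ f u` for every `t ∈ [c, 1]` (`SConvexFirst.le_of_mem_Icc`). Iterating this extends the
inequality to `t ∈ [c^n, 1]` for all `n` (`SConvexFirst.le_of_pow_le`), hence to all `t ∈ (0, 1]`.
-/

/-- `f : [0,∞) → ℝ` is `s`-convex in the first sense:
`f (λ₁ u + λ₂ v) ≤ λ₁^s f u + λ₂^s f v` for all `u, v ≥ 0` and
`λ₁, λ₂ ≥ 0` with `λ₁^s + λ₂^s = 1` (real powers). -/
def SConvexFirst (s : ℝ) (f : ℝ → ℝ) : Prop :=
  ∀ u v l1 l2 : ℝ, 0 ≤ u → 0 ≤ v → 0 ≤ l1 → 0 ≤ l2 →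
    l1 ^ s + l2 ^ s = 1 → f (l1 * u + l2 * v) ≤ l1 ^ s * f u + l2 ^ s * f v

/-- The contraction inequality for one step, with ratio between `h (1/2)` and `h 1 = 1`. -/
theorem SConvexFirst.le_of_mem_Icc {s : ℝ} (hs0 : 0 < s) {f : ℝ → ℝ} (hf : SConvexFirst s f)
    {t u : ℝ} (hu : 0 ≤ u) (ht : t ∈ Set.Icc (2 * (1 / 2 : ℝ) ^ s⁻¹) 1) :
    f (t * u) ≤ f u := by
  have hp : 0 < s⁻¹ := inv_pos.mpr hs0
  have hcont : ContinuousOn (fun a : ℝ => a ^ s⁻¹ + (1 - a) ^ s⁻¹) (Set.Icc (1 / 2) 1) :=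
    ((Real.continuous_rpow_const hp.le).add
      ((Real.continuous_rpow_const hp.le).comp (continuous_const.sub continuous_id))).continuousOn
  have hmem : t ∈ Set.Icc ((1 / 2 : ℝ) ^ s⁻¹ + (1 - 1 / 2) ^ s⁻¹)
      ((1 : ℝ) ^ s⁻¹ + (1 - 1) ^ s⁻¹) := by
    rw [sub_self, Real.zero_rpow hp.ne', Real.one_rpow, show (1 : ℝ) - 1 / 2 = 1 / 2 by norm_num,
      ← two_mul, add_zero]
    exact ht
  obtain ⟨a, ⟨ha0, ha1⟩, rfl⟩ := intermediate_value_Icc (by norm_num) hcont hmem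
  have ha : 0 ≤ a := by linarith
  have hb : 0 ≤ 1 - a := by linarith
  have h1 : (a ^ s⁻¹) ^ s = a := Real.rpow_inv_rpow ha hs0.ne'
  have h2 : ((1 - a) ^ s⁻¹) ^ s = 1 - a := Real.rpow_inv_rpow hb hs0.ne'
  have key := hf u u (a ^ s⁻¹) ((1 - a) ^ s⁻¹) hu hu (by positivity) (by positivity)
    (by rw [h1, h2]; ring)
  rw [h1, h2, ← add_mul, ← add_mul, add_sub_cancel, one_mul] at key
  exact key

/-- If the contraction inequality holds for ratios in `[c, 1]`, it holds for ratios in `[c^n, 1]`: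
a ratio `t < c` factors as `c * (t / c)`. -/
theorem SConvexFirst.le_of_pow_le {f : ℝ → ℝ} {c : ℝ} (hc0 : 0 < c) (hc1 : c ≤ 1)
    (h : ∀ t u : ℝ, 0 ≤ u → t ∈ Set.Icc c 1 → f (t * u) ≤ f u) (n : ℕ) :
    ∀ t u : ℝ, 0 ≤ u → c ^ n ≤ t → t ≤ 1 → f (t * u) ≤ f u := by
  induction n with
  | zero =>
    intro t u _ h1 h2
    have : t = 1 := le_antisymm h2 (by simpa using h1)
    simp [this]
  | succ n ih =>
    intro t u hu h1 h2
    rcases le_total c t with hct | htc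
    · exact h t u hu ⟨hct, h2⟩
    · have ht : 0 < t := lt_of_lt_of_le (by positivity) h1
      have e : t * u = c * (t / c * u) := by field_simp
      rw [e]
      exact (h c _ (by positivity) ⟨le_rfl, hc1⟩).trans
        (ih (t / c) u hu ((le_div_iff₀ hc0).mpr (by rwa [← pow_succ])) ((div_le_one hc0).mpr htc))

/-- an `s`-convex function in the first sense (0 < s < 1) is
non-decreasing on `(0, ∞)`. -/
theorem sConvexFirst_monotoneOn_pos {s : ℝ} (hs0 : 0 < s) (hs1 : s < 1)
    {f : ℝ → ℝ} (hf : SConvexFirst s f) :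
    ∀ u v : ℝ, 0 < u → u ≤ v → f u ≤ f v := by
  intro u v hu huv
  have hv : 0 < v := hu.trans_le huv
  have hc0 : 0 < 2 * (1 / 2 : ℝ) ^ s⁻¹ := by positivity
  have hc1 : 2 * (1 / 2 : ℝ) ^ s⁻¹ < 1 := by
    have := Real.rpow_lt_rpow_of_exponent_gt (x := (1 / 2 : ℝ)) (by norm_num) (by norm_num)
      ((one_lt_inv₀ hs0).mpr hs1)
    rw [Real.rpow_one] at this
    linarith
  obtain ⟨n, hn⟩ := exists_pow_lt_of_lt_one (div_pos hu hv) hc1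
  have := SConvexFirst.le_of_pow_le hc0 hc1.le
    (fun t u hu ht => hf.le_of_mem_Icc hs0 hu ht) n (u / v) v hv.le hn.le ((div_le_one hv).mpr huv)
  rwa [div_mul_cancel₀ _ hv.ne'] at this
end

section
/- Let 0 < s < 1 and let f : [0,∞) → ℝ be s-convex in the first sense. For every u > 0 and every t ∈ (0,1], one has f(tu) ≤ f(u). -/
/-- The factors reached in a single application of `s`-convexity fill `[m, 1]`, where
`m = 2 * (1 / 2) ^ (1 / s)`, by the intermediate value theorem. -/
lemma SConvexFirst.mul_le_of_le {s : ℝ} (hs0 : 0 < s) {f : ℝ → ℝ} (hf : SConvexFirst s f)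
    {u t : ℝ} (hu : 0 ≤ u) (hmt : 2 * (1 / 2 : ℝ) ^ (1 / s) ≤ t) (ht1 : t ≤ 1) :
    f (t * u) ≤ f u := by
  have hp : 0 < 1 / s := by positivity
  have hcont : Continuous fun x : ℝ => (1 - x) ^ (1 / s) + x ^ (1 / s) :=
    ((continuous_const.sub continuous_id).rpow_const fun _ => Or.inr hp.le).add
      (continuous_id.rpow_const fun _ => Or.inr hp.le)
  have himg := intermediate_value_Icc' (by norm_num : (0 : ℝ) ≤ 1 / 2) hcont.continuousOn
  obtain ⟨x, ⟨hx0, hx1⟩, hx⟩ := himg (show t ∈ _ by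
    constructor
    · have : (1 - 1 / 2 : ℝ) = 1 / 2 := by norm_num
      simp only [this]
      linarith
    · simpa [Real.zero_rpow hs0.ne', Real.zero_rpow (inv_pos.2 hs0).ne'] using ht1)
  have hpow : ∀ y : ℝ, 0 ≤ y → (y ^ (1 / s)) ^ s = y := fun y hy => by
    rw [← Real.rpow_mul hy, one_div_mul_cancel hs0.ne', Real.rpow_one]
  have hy : 0 ≤ 1 - x := by linarith
  have key := hf u u ((1 - x) ^ (1 / s)) (x ^ (1 / s)) hu hu (Real.rpow_nonneg hy _)
    (Real.rpow_nonneg hx0 _) (by rw [hpow _ hy, hpow _ hx0]; ring)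
  rw [hpow _ hy, hpow _ hx0, ← add_mul, ← add_mul] at key
  simp only at hx
  rw [hx] at key
  linarith

/-- for an `s`-convex function in the first sense (0 < s < 1),
`f (t * u) ≤ f u` for all `u > 0` and `t ∈ (0, 1]`. -/
theorem sConvexFirst_smul_le {s : ℝ} (hs0 : 0 < s) (hs1 : s < 1)
    {f : ℝ → ℝ} (hf : SConvexFirst s f) :
    ∀ u t : ℝ, 0 < u → 0 < t → t ≤ 1 → f (t * u) ≤ f u := by
  intro u t hu ht ht1
  obtain ⟨m, hm⟩ : ∃ m : ℝ, m = 2 * (1 / 2 : ℝ) ^ (1 / s) := ⟨_, rfl⟩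
  have hm0 : 0 < m := by rw [hm]; positivity
  have hm1 : m < 1 := by
    have h := Real.rpow_lt_rpow_of_exponent_gt (by norm_num : (0 : ℝ) < 1 / 2) (by norm_num)
      ((one_lt_div hs0).2 hs1)
    rw [Real.rpow_one] at h
    linarith
  obtain ⟨n, hn⟩ := exists_pow_lt_of_lt_one ht hm1
  induction n generalizing t with
  | zero => exact absurd ht1 (by simpa using hn)
  | succ n ih =>
    rcases le_or_gt m t with h | h
    · exact hf.mul_le_of_le hs0 hu.le (hm ▸ h) ht1
    · have h1 := ih (t / m) (by positivity) ((div_le_one hm0).2 h.le)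
        (by rwa [lt_div_iff₀ hm0, ← pow_succ])
      have h2 := hf.mul_le_of_le hs0 (u := t / m * u) (by positivity) hm.ge hm1.le
      rw [← mul_assoc, mul_div_cancel₀ _ hm0.ne'] at h2
      exact h2.trans h1
end

section
/- Let 0 < s < 1 and let f : [0,∞) → ℝ be s-convex in the first sense. If f(u) tends to a limit L as u → 0 from within (0,∞), then L ≤ f(0). -/
/-- if an `s`-convex function in the first sense (0 < s < 1)
has a limit `L` as `u → 0⁺`, then `L ≤ f 0`. -/
theorem sConvexFirst_limit_right_le {s : ℝ} (hs0 : 0 < s) (hs1 : s < 1)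
    {f : ℝ → ℝ} (hf : SConvexFirst s f) {L : ℝ}
    (hL : Filter.Tendsto f (nhdsWithin 0 (Set.Ioi 0)) (nhds L)) :
    L ≤ f 0 := by
  -- With `c ^ s = 1 / 2`, the points `u` and `0` give `f (c u) ≤ (f u + f 0) / 2`;
  -- letting `u → 0⁺` yields `L ≤ (L + f 0) / 2`.
  have hc : (0 : ℝ) < (1 / 2 : ℝ) ^ (s⁻¹) := by positivity
  have hcs : ((1 / 2 : ℝ) ^ (s⁻¹)) ^ s = 1 / 2 := Real.rpow_inv_rpow (by norm_num) hs0.ne'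
  generalize (1 / 2 : ℝ) ^ (s⁻¹) = c at hc hcs
  have hmul : Filter.Tendsto (fun u : ℝ => c * u)
      (nhdsWithin 0 (Set.Ioi 0)) (nhdsWithin 0 (Set.Ioi 0)) := by
    refine tendsto_nhdsWithin_iff.2 ⟨?_, ?_⟩
    · have h : Continuous fun u : ℝ => c * u := by fun_prop
      simpa using (h.tendsto 0).mono_left nhdsWithin_le_nhds
    · filter_upwards [self_mem_nhdsWithin] with u hu using mul_pos hc hu
  have hle : L ≤ 1 / 2 * L + 1 / 2 * f 0 := by
    refine le_of_tendsto_of_tendsto (hL.comp hmul)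
      ((hL.const_mul (1 / 2)).add_const (1 / 2 * f 0)) ?_
    filter_upwards [self_mem_nhdsWithin] with u hu
    have h := hf u 0 c c (le_of_lt hu) le_rfl hc.le hc.le (by rw [hcs]; norm_num)
    simpa only [hcs, mul_zero, add_zero, Function.comp_apply] using h
  linarith
end

section
/- Let 0 < s < 1 and let f : [0,∞) → ℝ be s-convex in the second sense. Then f is non-negative on [0,∞); that is, f(u) ≥ 0 for all u ≥ 0. -/
/-- `f : [0,∞) → ℝ` is `s`-convex in the second sense:
`f (λ₁ u + λ₂ v) ≤ λ₁^s f u + λ₂^s f v` for all `u, v ≥ 0` and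
`λ₁, λ₂ ≥ 0` with `λ₁ + λ₂ = 1` (real powers). -/
def SConvexSecond (s : ℝ) (f : ℝ → ℝ) : Prop :=
  ∀ u v l1 l2 : ℝ, 0 ≤ u → 0 ≤ v → 0 ≤ l1 → 0 ≤ l2 →
    l1 + l2 = 1 → f (l1 * u + l2 * v) ≤ l1 ^ s * f u + l2 ^ s * f v

/-- an `s`-convex function in the second sense (0 < s < 1) is
non-negative on `[0, ∞)`. -/
theorem sConvexSecond_nonneg {s : ℝ} (hs0 : 0 < s) (hs1 : s < 1)
    {f : ℝ → ℝ} (hf : SConvexSecond s f) :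
    ∀ u : ℝ, 0 ≤ u → 0 ≤ f u := by
  intro u hu
  -- The midpoint of `u` and itself gives `f u ≤ 2 * (1/2)^s * f u`, and `2 * (1/2)^s > 1`.
  have h := hf u u (1 / 2) (1 / 2) hu hu (by norm_num) (by norm_num) (by norm_num)
  have hmid : (1 / 2 : ℝ) * u + 1 / 2 * u = u := by ring
  rw [hmid] at h
  have hc : (1 / 2 : ℝ) < (1 / 2 : ℝ) ^ s := by
    simpa using Real.rpow_lt_rpow_of_exponent_gt (x := (1 / 2 : ℝ)) (by norm_num) (by norm_num) hs1
  by_contra! hneg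
  nlinarith
end

section
/- Let 0 < s < 1 and let f : [0,∞) → ℝ be s-convex in the first sense. Then the inequality f(λ₁u + λ₂v) ≤ λ₁^s f(u) + λ₂^s f(v) holds for all u, v ≥ 0 and all λ₁, λ₂ ≥ 0 with λ₁^s + λ₂^s < 1 if and only if f(0) ≤ 0. -/
/-- for an `s`-convex function in the first sense (0 < s < 1),
the defining inequality holds for all `λ₁, λ₂ ≥ 0` with `λ₁^s + λ₂^s < 1`
if and only if `f 0 ≤ 0`. -/
theorem sConvexFirst_subadditive_iff {s : ℝ} (hs0 : 0 < s) (hs1 : s < 1)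
    {f : ℝ → ℝ} (hf : SConvexFirst s f) :
    (∀ u v l1 l2 : ℝ, 0 ≤ u → 0 ≤ v → 0 ≤ l1 → 0 ≤ l2 →
        l1 ^ s + l2 ^ s < 1 →
        f (l1 * u + l2 * v) ≤ l1 ^ s * f u + l2 ^ s * f v)
      ↔ f 0 ≤ 0 := by
  constructor
  · intro h
    simpa [Real.zero_rpow hs0.ne'] using h 0 0 0 0 le_rfl le_rfl le_rfl le_rfl
      (by simp [Real.zero_rpow hs0.ne'])
  · intro h0 u v l1 l2 hu hv hl1 hl2 hlt
    have p1 : 0 ≤ l1 ^ s := Real.rpow_nonneg hl1 s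
    have p2 : 0 ≤ l2 ^ s := Real.rpow_nonneg hl2 s
    obtain ha | ha := (add_nonneg p1 p2).eq_or_lt
    · have e1 : l1 = 0 := (Real.rpow_eq_zero hl1 hs0.ne').1 (by linarith)
      have e2 : l2 = 0 := (Real.rpow_eq_zero hl2 hs0.ne').1 (by linarith)
      simpa [e1, e2, Real.zero_rpow hs0.ne'] using h0
    · set a := l1 ^ s + l2 ^ s with ha_def
      have hc : 0 < a ^ s⁻¹ := Real.rpow_pos_of_pos ha _
      have hcs : (a ^ s⁻¹) ^ s = a := Real.rpow_inv_rpow ha.le hs0.ne'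
      have hds : ((1 - a) ^ s⁻¹) ^ s = 1 - a :=
        Real.rpow_inv_rpow (by linarith) hs0.ne'
      set c := a ^ s⁻¹
      have hw := hf u v (l1 / c) (l2 / c) hu hv (by positivity) (by positivity) (by
        rw [Real.div_rpow hl1 hc.le, Real.div_rpow hl2 hc.le, hcs, ← add_div, ← ha_def,
          div_self ha.ne'])
      have h1 := hf (l1 / c * u + l2 / c * v) 0 c ((1 - a) ^ s⁻¹) (by positivity) le_rfl
        hc.le (Real.rpow_nonneg (by linarith) _) (by rw [hcs, hds]; ring)
      rw [Real.div_rpow hl1 hc.le, Real.div_rpow hl2 hc.le, hcs] at hw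
      rw [hcs, hds, show c * (l1 / c * u + l2 / c * v) + (1 - a) ^ s⁻¹ * 0 = l1 * u + l2 * v by
        field_simp; ring] at h1
      calc f (l1 * u + l2 * v)
          ≤ a * f (l1 / c * u + l2 / c * v) + (1 - a) * f 0 := h1
        _ ≤ a * f (l1 / c * u + l2 / c * v) := by
          linarith [mul_nonpos_of_nonneg_of_nonpos (sub_nonneg.2 hlt.le) h0]
        _ ≤ a * (l1 ^ s / a * f u + l2 ^ s / a * f v) := mul_le_mul_of_nonneg_left hw ha.le
        _ = l1 ^ s * f u + l2 ^ s * f v := by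
          have := ha.ne'
          clear_value a
          field_simp
end

section
/- Let 0 < s < 1 and let f : [0,∞) → ℝ be s-convex in the second sense. Then the inequality f(λ₁u + λ₂v) ≤ λ₁^s f(u) + λ₂^s f(v) holds for all u, v ≥ 0 and all λ₁, λ₂ ≥ 0 with λ₁ + λ₂ < 1 if and only if f(0) = 0. -/
theorem SConvexSecond.zero_nonneg {s : ℝ} (hs1 : s < 1) {f : ℝ → ℝ}
    (hf : SConvexSecond s f) : 0 ≤ f 0 := by
  have h := hf 0 0 (1 / 2) (1 / 2) le_rfl le_rfl (by norm_num) (by norm_num) (by norm_num)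
  have hp : (1 / 2 : ℝ) < (1 / 2 : ℝ) ^ s := by
    simpa only [Real.rpow_one] using
      Real.rpow_lt_rpow_of_exponent_gt (x := (1 / 2 : ℝ)) (by norm_num) (by norm_num) hs1
  simp only [mul_zero, add_zero] at h
  by_contra! hneg
  nlinarith [mul_pos (sub_pos.mpr hp) (neg_pos.mpr hneg)]

theorem SConvexSecond.map_mul_le {s : ℝ} {f : ℝ → ℝ} (hf : SConvexSecond s f) (h0 : f 0 = 0)
    {t u : ℝ} (ht0 : 0 ≤ t) (ht1 : t ≤ 1) (hu : 0 ≤ u) : f (t * u) ≤ t ^ s * f u := by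
  simpa [h0] using hf u 0 t (1 - t) hu le_rfl ht0 (by linarith) (by ring)

/-- for an `s`-convex function in the second sense (0 < s < 1),
the defining inequality holds for all `λ₁, λ₂ ≥ 0` with `λ₁ + λ₂ < 1`
if and only if `f 0 = 0`. -/
theorem sConvexSecond_subadditive_iff {s : ℝ} (hs0 : 0 < s) (hs1 : s < 1)
    {f : ℝ → ℝ} (hf : SConvexSecond s f) :
    (∀ u v l1 l2 : ℝ, 0 ≤ u → 0 ≤ v → 0 ≤ l1 → 0 ≤ l2 →
        l1 + l2 < 1 →
        f (l1 * u + l2 * v) ≤ l1 ^ s * f u + l2 ^ s * f v)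
      ↔ f 0 = 0 := by
  constructor
  · intro h
    refine le_antisymm ?_ (hf.zero_nonneg hs1)
    simpa [Real.zero_rpow hs0.ne'] using h 0 0 0 0 le_rfl le_rfl le_rfl le_rfl (by norm_num)
  · intro h0 u v l1 l2 hu hv h1 h2 hlt
    rcases (add_nonneg h1 h2).eq_or_lt with ht | ht
    · obtain rfl : l1 = 0 := by linarith
      obtain rfl : l2 = 0 := by linarith
      simp [h0, Real.zero_rpow hs0.ne']
    · set t := l1 + l2 with ht_def
      have ha : 0 ≤ l1 / t := div_nonneg h1 ht.le
      have hb : 0 ≤ l2 / t := div_nonneg h2 ht.le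
      have hab : l1 / t + l2 / t = 1 := by rw [← add_div, ← ht_def, div_self ht.ne']
      have hweight (l : ℝ) (hl : 0 ≤ l / t) : (l / t) ^ s * t ^ s = l ^ s := by
        rw [← Real.mul_rpow hl ht.le, div_mul_cancel₀ l ht.ne']
      calc f (l1 * u + l2 * v) = f (l1 / t * (t * u) + l2 / t * (t * v)) := by
            rw [← mul_assoc, ← mul_assoc, div_mul_cancel₀ l1 ht.ne', div_mul_cancel₀ l2 ht.ne']
        _ ≤ (l1 / t) ^ s * f (t * u) + (l2 / t) ^ s * f (t * v) :=
            hf _ _ _ _ (mul_nonneg ht.le hu) (mul_nonneg ht.le hv) ha hb hab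
        _ ≤ (l1 / t) ^ s * (t ^ s * f u) + (l2 / t) ^ s * (t ^ s * f v) := by
            gcongr
            · exact hf.map_mul_le h0 ht.le hlt.le hu
            · exact hf.map_mul_le h0 ht.le hlt.le hv
        _ = l1 ^ s * f u + l2 ^ s * f v := by
            rw [← mul_assoc, ← mul_assoc, hweight l1 ha, hweight l2 hb]
end

section
/- Let 0 < s ≤ 1. If f : [0,∞) → ℝ is s-convex in the second sense and f(0) = 0, then f is s-convex in the first sense. -/
/-- for `0 < s ≤ 1`, if `f` is `s`-convex in the second sense
and `f 0 = 0`, then `f` is `s`-convex in the first sense. -/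
theorem sConvexSecond_to_first {s : ℝ} (hs0 : 0 < s) (hs1 : s ≤ 1)
    {f : ℝ → ℝ} (hf : SConvexSecond s f) (hf0 : f 0 = 0) :
    SConvexFirst s f := by
  intro u v l1 l2 hu hv h1 h2 h
  have p1 := Real.rpow_nonneg h1 s
  have p2 := Real.rpow_nonneg h2 s
  -- `l ^ s ≤ 1` forces `l ≤ 1`, hence `l ≤ l ^ s` as `s ≤ 1`.
  have key : ∀ l : ℝ, 0 ≤ l → l ^ s ≤ 1 → l ≤ l ^ s := fun l hl hls =>
    Real.self_le_rpow_of_le_one hl (by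
      by_contra! hc
      exact absurd (Real.one_lt_rpow hc hs0) hls.not_gt) hs1
  have hg1 : l1 + l2 ≤ 1 := by
    linarith [key l1 h1 (by linarith), key l2 h2 (by linarith)]
  have hg0 : 0 < l1 + l2 := by
    rcases h1.eq_or_lt with rfl | h1'
    · rcases h2.eq_or_lt with rfl | h2'
      · simp [Real.zero_rpow hs0.ne'] at h
      · linarith
    · linarith
  set g := l1 + l2 with hg
  have ha : 0 ≤ l1 / g := by positivity
  have hb : 0 ≤ l2 / g := by positivity
  -- Normalize the weights, then contract by `g` towards `0`, where `f` vanishes.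
  have A := hf u v (l1 / g) (l2 / g) hu hv ha hb (by rw [← add_div, ← hg, div_self hg0.ne'])
  have B := hf (l1 / g * u + l2 / g * v) 0 g (1 - g) (by positivity) le_rfl hg0.le
    (by linarith) (by ring)
  have e : g * (l1 / g * u + l2 / g * v) + (1 - g) * 0 = l1 * u + l2 * v := by
    field_simp
    ring
  have hgs := Real.rpow_pos_of_pos hg0 s
  rw [e, hf0, mul_zero, add_zero] at B
  calc f (l1 * u + l2 * v) ≤ g ^ s * f (l1 / g * u + l2 / g * v) := B
    _ ≤ g ^ s * ((l1 / g) ^ s * f u + (l2 / g) ^ s * f v) := by gcongr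
    _ = l1 ^ s * f u + l2 ^ s * f v := by
      rw [Real.div_rpow h1 hg0.le, Real.div_rpow h2 hg0.le]
      field_simp
end

section
/- Let 0 < s < 1 and let p : [0,∞) → [0,∞) be a non-decreasing, non-negative function. Then the function f : [0,∞) → ℝ defined by f(u) = u^(s/(1−s)) · p(u) is s-convex in the first sense. -/
/-- A weight `l ∈ [0, 1]` is at most `l ^ s`; the bound `l ≤ 1` is expressed through the
complementary weight. -/
lemma weight_le_rpow {s l m : ℝ} (hs0 : 0 < s) (hs1 : s < 1) (hl : 0 ≤ l) (hm : 0 ≤ m)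
    (h : l ^ s + m ^ s = 1) : l ≤ l ^ s := by
  have hl1 : l ≤ 1 := by
    by_contra! hlt
    have h1 := Real.one_lt_rpow hlt hs0
    have h2 := Real.rpow_nonneg hm s
    linarith
  rcases hl.eq_or_lt with rfl | hpos
  · exact Real.rpow_nonneg le_rfl s
  · simpa using Real.rpow_le_rpow_of_exponent_ge hpos hl1 hs1.le

lemma sConvexFirst_ineq_of_le {s : ℝ} (hs0 : 0 < s) (hs1 : s < 1)
    {p : ℝ → ℝ} (hp_mono : ∀ u v : ℝ, 0 ≤ u → u ≤ v → p u ≤ p v)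
    (hp_nonneg : ∀ u : ℝ, 0 ≤ u → 0 ≤ p u) {u v l1 l2 : ℝ} (hu : 0 ≤ u) (huv : u ≤ v)
    (h1 : 0 ≤ l1) (h2 : 0 ≤ l2) (h : l1 ^ s + l2 ^ s = 1) :
    (l1 * u + l2 * v) ^ (s / (1 - s)) * p (l1 * u + l2 * v) ≤
      l1 ^ s * (u ^ (s / (1 - s)) * p u) + l2 ^ s * (v ^ (s / (1 - s)) * p v) := by
  have hv : 0 ≤ v := hu.trans huv
  have ha := weight_le_rpow hs0 hs1 h1 h2 h
  have hb := weight_le_rpow hs0 hs1 h2 h1 (by linarith)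
  have has := Real.rpow_nonneg h1 s
  have hbs := Real.rpow_nonneg h2 s
  have hs1' : 0 < 1 - s := by linarith
  have hq : 0 ≤ s / (1 - s) := by positivity
  have hf : ∀ x y : ℝ, 0 ≤ x → x ≤ y →
      x ^ (s / (1 - s)) * p x ≤ y ^ (s / (1 - s)) * p y := fun x y hx hxy =>
    mul_le_mul (Real.rpow_le_rpow hx hxy hq) (hp_mono x y hx hxy) (hp_nonneg x hx)
      (Real.rpow_nonneg (hx.trans hxy) _)
  have hw : 0 ≤ l1 * u + l2 * v := by positivity
  have hwv : l1 * u + l2 * v ≤ v := by nlinarith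
  obtain ⟨w, hwdef⟩ : ∃ w, w = l1 * u + l2 * v := ⟨_, rfl⟩
  rw [← hwdef] at hw hwv ⊢
  rcases le_or_gt w u with hwu | huw
  · have e1 := hf w u hw hwu
    have e2 := mul_le_mul_of_nonneg_left e1 has
    have e3 := mul_le_mul_of_nonneg_left (e1.trans (hf u v hu huv)) hbs
    calc w ^ (s / (1 - s)) * p w
        = l1 ^ s * (w ^ (s / (1 - s)) * p w) + l2 ^ s * (w ^ (s / (1 - s)) * p w) := by
          rw [← add_mul, h, one_mul]
      _ ≤ _ := add_le_add e2 e3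
  · have hl2 : 0 < l2 := by
      rcases h2.eq_or_lt with rfl | hpos
      · exfalso
        nlinarith
      · exact hpos
    have hbpos : 0 < l2 ^ s := Real.rpow_pos_of_pos hl2 s
    have hkey : l2 ^ s * w ≤ l2 ^ s * (l2 ^ (1 - s) * v) := by
      rw [← mul_assoc, ← Real.rpow_add hl2, add_sub_cancel, Real.rpow_one]
      nlinarith
    have hpow : w ^ (s / (1 - s)) ≤ l2 ^ s * v ^ (s / (1 - s)) := by
      have := Real.rpow_le_rpow hw (le_of_mul_le_mul_left hkey hbpos) hq
      rwa [Real.mul_rpow (Real.rpow_nonneg h2 _) hv, ← Real.rpow_mul h2,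
        mul_div_cancel₀ _ hs1'.ne'] at this
    have hvq : 0 ≤ v ^ (s / (1 - s)) := Real.rpow_nonneg hv _
    have e := mul_le_mul hpow (hp_mono w v hw hwv) (hp_nonneg w hw) (mul_nonneg hbs hvq)
    have e' : 0 ≤ l1 ^ s * (u ^ (s / (1 - s)) * p u) :=
      mul_nonneg has (mul_nonneg (Real.rpow_nonneg hu _) (hp_nonneg u hu))
    linarith

/-- for `0 < s < 1` and a non-decreasing non-negative
`p : [0,∞) → [0,∞)`, the function `f u = u ^ (s / (1 - s)) * p u` is
`s`-convex in the first sense. -/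
theorem sConvexFirst_rpow_mul_monotone {s : ℝ} (hs0 : 0 < s) (hs1 : s < 1)
    {p : ℝ → ℝ} (hp_mono : ∀ u v : ℝ, 0 ≤ u → u ≤ v → p u ≤ p v)
    (hp_nonneg : ∀ u : ℝ, 0 ≤ u → 0 ≤ p u) :
    SConvexFirst s (fun u => u ^ (s / (1 - s)) * p u) := by
  intro u v l1 l2 hu hv h1 h2 h
  rcases le_total u v with huv | hvu
  · exact sConvexFirst_ineq_of_le hs0 hs1 hp_mono hp_nonneg hu huv h1 h2 h
  · have := sConvexFirst_ineq_of_le hs0 hs1 hp_mono hp_nonneg hv hvu h2 h1 (by linarith)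
    rw [add_comm (l2 * v), add_comm (l2 ^ s * _)] at this
    exact this
end

section
/- Let 0 < s₁ ≤ 1 and 0 < s₂ ≤ 1, and set s = s₁·s₂. Let f : [0,∞) → ℝ be s₁-convex in the first sense, non-decreasing on [0,∞), with f(0) ≤ 0, and let g : [0,∞) → [0,∞) be s₂-convex in the first sense, non-negative, with g(0) = 0. Then the composition f ∘ g is s-convex in the first sense. -/
/-- An `s`-convex function vanishing at `0` satisfies the convexity inequality also for weights with
`l1 ^ s + l2 ^ s ≤ 1`: normalise the weights by `t = (l1 ^ s + l2 ^ s) ^ (1 / s)`, and move the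
factor `t` out of `g (t * u)` by convexity between `u` and `0`. -/
theorem SConvexFirst.le_of_le_one {s : ℝ} (hs : 0 < s) {g : ℝ → ℝ} (hg : SConvexFirst s g)
    (hg0 : g 0 = 0) {u v l1 l2 : ℝ} (hu : 0 ≤ u) (hv : 0 ≤ v) (h1 : 0 ≤ l1) (h2 : 0 ≤ l2)
    (hpos : 0 < l1 ^ s + l2 ^ s) (hle : l1 ^ s + l2 ^ s ≤ 1) :
    g (l1 * u + l2 * v) ≤ l1 ^ s * g u + l2 ^ s * g v := by
  have root : ∀ c : ℝ, 0 ≤ c → (c ^ s⁻¹) ^ s = c := fun c hc => Real.rpow_inv_rpow hc hs.ne'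
  set c := l1 ^ s + l2 ^ s with hc
  set t := c ^ s⁻¹ with ht
  have htpos : 0 < t := Real.rpow_pos_of_pos hpos _
  have hts : t ^ s = c := root c hpos.le
  have scale : ∀ w : ℝ, 0 ≤ w → g (t * w) ≤ c * g w := by
    intro w hw
    have h := hg w 0 t ((1 - c) ^ s⁻¹) hw le_rfl htpos.le
      (Real.rpow_nonneg (by linarith) _) (by rw [hts, root _ (by linarith)]; ring)
    simpa [hg0, hts] using h
  have e1 : (l1 / t) ^ s = l1 ^ s / c := by rw [Real.div_rpow h1 htpos.le, hts]
  have e2 : (l2 / t) ^ s = l2 ^ s / c := by rw [Real.div_rpow h2 htpos.le, hts]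
  have h := hg (t * u) (t * v) (l1 / t) (l2 / t) (by positivity) (by positivity)
    (by positivity) (by positivity) (by rw [e1, e2, ← add_div, ← hc, div_self hpos.ne'])
  rw [e1, e2, ← mul_assoc, ← mul_assoc, div_mul_cancel₀ _ htpos.ne',
    div_mul_cancel₀ _ htpos.ne'] at h
  calc g (l1 * u + l2 * v) ≤ l1 ^ s / c * g (t * u) + l2 ^ s / c * g (t * v) := h
    _ ≤ l1 ^ s / c * (c * g u) + l2 ^ s / c * (c * g v) := by
      gcongr
      · exact scale u hu
      · exact scale v hv
    _ = l1 ^ s * g u + l2 ^ s * g v := by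
      rw [← mul_assoc, ← mul_assoc, div_mul_cancel₀ _ hpos.ne', div_mul_cancel₀ _ hpos.ne']

/-- for `0 < s₁ ≤ 1`, `0 < s₂ ≤ 1` and `s = s₁ * s₂`, if `f` is
`s₁`-convex in the first sense, non-decreasing on `[0,∞)` with `f 0 ≤ 0`, and
`g` is `s₂`-convex in the first sense, non-negative with `g 0 = 0`, then
`f ∘ g` is `s`-convex in the first sense. -/
theorem sConvexFirst_comp {s₁ s₂ : ℝ} (hs₁0 : 0 < s₁) (hs₁1 : s₁ ≤ 1)
    (hs₂0 : 0 < s₂) (hs₂1 : s₂ ≤ 1)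
    {f g : ℝ → ℝ} (hf : SConvexFirst s₁ f)
    (hf_mono : ∀ u v : ℝ, 0 ≤ u → u ≤ v → f u ≤ f v) (hf0 : f 0 ≤ 0)
    (hg : SConvexFirst s₂ g) (hg_nonneg : ∀ u : ℝ, 0 ≤ u → 0 ≤ g u)
    (hg0 : g 0 = 0) :
    SConvexFirst (s₁ * s₂) (f ∘ g) := by
  intro u v l1 l2 hu hv h1 h2 h
  have r1 : l1 ^ (s₁ * s₂) = (l1 ^ s₂) ^ s₁ := by rw [mul_comm, Real.rpow_mul h1]
  have r2 : l2 ^ (s₁ * s₂) = (l2 ^ s₂) ^ s₁ := by rw [mul_comm, Real.rpow_mul h2]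
  rw [r1, r2] at h ⊢
  have ha : 0 ≤ l1 ^ s₂ := Real.rpow_nonneg h1 _
  have hb : 0 ≤ l2 ^ s₂ := Real.rpow_nonneg h2 _
  have key : ∀ a : ℝ, 0 ≤ a → a ^ s₁ ≤ 1 → a ≤ a ^ s₁ := by
    intro a ha h
    have ha1 : a ≤ 1 := by
      by_contra! hlt
      exact absurd h (not_le.mpr (Real.one_lt_rpow hlt hs₁0))
    exact Real.self_le_rpow_of_le_one ha ha1 hs₁1
  have hA : 0 ≤ (l1 ^ s₂) ^ s₁ := Real.rpow_nonneg ha _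
  have hB : 0 ≤ (l2 ^ s₂) ^ s₁ := Real.rpow_nonneg hb _
  have hle : l1 ^ s₂ + l2 ^ s₂ ≤ 1 := by
    linarith [key _ ha (by linarith), key _ hb (by linarith)]
  have hpos : 0 < l1 ^ s₂ + l2 ^ s₂ := by
    refine lt_of_le_of_ne (add_nonneg ha hb) fun h0 => ?_
    have ha0 : l1 ^ s₂ = 0 := by linarith
    have hb0 : l2 ^ s₂ = 0 := by linarith
    rw [ha0, hb0, Real.zero_rpow hs₁0.ne'] at h
    norm_num at h
  have hgle := hg.le_of_le_one hs₂0 hg0 hu hv h1 h2 hpos hle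
  exact (hf_mono _ _ (hg_nonneg _ (by positivity)) hgle).trans
    (hf _ _ _ _ (hg_nonneg u hu) (hg_nonneg v hv) ha hb h)
end

section
/- Let 0 < s₁ < 1 and 0 < s₂ < 1, and set s = min(s₁, s₂). Let f : [0,∞) → ℝ be s₁-convex in the first sense and non-negative, and let g : [0,∞) → ℝ be s₂-convex in the first sense and non-negative. Assume that either (f(0) = 0 and g(u) → g(0) as u → 0 from within (0,∞)) or (g(0) = 0 and f(u) → f(0) as u → 0 from within (0,∞)). Then the pointwise product f·g is s-convex in the first sense. -/
/-- Scaling by a factor in `[2 (1/2)^(1/s), 1]` does not increase `f`; the intermediate value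
theorem writes such a factor as `a^(1/s) + (1-a)^(1/s)`. -/
lemma SConvexFirst.scale_step {s : ℝ} (hs0 : 0 < s) {f : ℝ → ℝ}
    (hf : SConvexFirst s f) {t u : ℝ} (hu : 0 ≤ u)
    (ht : 2 * (1 / 2 : ℝ) ^ (1 / s) ≤ t) (ht1 : t ≤ 1) : f (t * u) ≤ f u := by
  have hp : 0 < 1 / s := by positivity
  have hcont : Continuous (fun a : ℝ => a ^ (1 / s) + (1 - a) ^ (1 / s)) :=
    (Real.continuous_rpow_const hp.le).add
      ((Real.continuous_rpow_const hp.le).comp (continuous_const.sub continuous_id))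
  have hmem : t ∈ Set.Icc ((1 / 2 : ℝ) ^ (1 / s) + (1 - 1 / 2) ^ (1 / s))
      ((1 : ℝ) ^ (1 / s) + (1 - 1) ^ (1 / s)) := by
    constructor
    · have h : (1 - 1 / 2 : ℝ) = 1 / 2 := by norm_num
      rw [h]
      linarith
    · rw [sub_self, Real.one_rpow, Real.zero_rpow hp.ne']
      linarith
  obtain ⟨a, ⟨ha0, ha1⟩, hat⟩ :=
    intermediate_value_Icc (by norm_num : (1 / 2 : ℝ) ≤ 1) hcont.continuousOn hmem
  have ha0' : 0 ≤ a := by linarith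
  have hb0 : 0 ≤ 1 - a := by linarith
  have e1 : (a ^ (1 / s)) ^ s = a := by
    rw [← Real.rpow_mul ha0', one_div_mul_cancel hs0.ne', Real.rpow_one]
  have e2 : ((1 - a) ^ (1 / s)) ^ s = 1 - a := by
    rw [← Real.rpow_mul hb0, one_div_mul_cancel hs0.ne', Real.rpow_one]
  have h := hf u u (a ^ (1 / s)) ((1 - a) ^ (1 / s)) hu hu
    (Real.rpow_nonneg ha0' _) (Real.rpow_nonneg hb0 _) (by rw [e1, e2]; ring)
  rw [e1, e2, ← add_mul] at h
  simp only at hat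
  rw [hat] at h
  linarith

lemma SConvexFirst.monotoneOn_Ioi {s : ℝ} (hs0 : 0 < s) (hs1 : s < 1) {f : ℝ → ℝ}
    (hf : SConvexFirst s f) : MonotoneOn f (Set.Ioi 0) := by
  obtain ⟨c, hc⟩ : ∃ c : ℝ, c = 2 * (1 / 2 : ℝ) ^ (1 / s) := ⟨_, rfl⟩
  have hc0 : 0 < c := by rw [hc]; positivity
  have hc1 : c < 1 := by
    have h : (1 / 2 : ℝ) ^ (1 / s) < (1 / 2 : ℝ) ^ (1 : ℝ) :=
      Real.rpow_lt_rpow_of_exponent_gt (by norm_num) (by norm_num) (by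
        rw [lt_div_iff₀ hs0]; linarith)
    rw [Real.rpow_one] at h
    rw [hc]; linarith
  have key : ∀ n : ℕ, ∀ t u : ℝ, 0 ≤ u → c ^ n ≤ t → t ≤ 1 → f (t * u) ≤ f u := by
    intro n
    induction n with
    | zero =>
      intro t u _ h1 h2
      have : t = 1 := le_antisymm h2 (by simpa using h1)
      simp [this]
    | succ n ih =>
      intro t u hu h1 h2
      rcases le_or_gt c t with h | h
      · exact hf.scale_step hs0 hu (hc ▸ h) h2
      · have ht0 : 0 ≤ t := le_trans (by positivity) h1
        have h3 : f (t / c * u) ≤ f u := by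
          refine ih _ u hu ?_ ((div_le_one hc0).2 h.le)
          rwa [le_div_iff₀ hc0, ← pow_succ]
        have h4 : f (c * (t / c * u)) ≤ f (t / c * u) :=
          hf.scale_step hs0 (by positivity) hc.ge hc1.le
        have e : c * (t / c * u) = t * u := by field_simp
        rw [e] at h4
        exact h4.trans h3
  intro x hx y hy hxy
  have hx : 0 < x := hx
  have hy : 0 < y := hy
  obtain ⟨n, hn⟩ := exists_pow_lt_of_lt_one (div_pos hx hy) hc1
  have h := key n (x / y) y hy.le hn.le ((div_le_one hy).2 hxy)
  rwa [div_mul_cancel₀ _ hy.ne'] at h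

lemma monotoneOn_Ici_of_Ioi {f : ℝ → ℝ} (hf : MonotoneOn f (Set.Ioi 0))
    (h0 : ∀ u, 0 < u → f 0 ≤ f u) : MonotoneOn f (Set.Ici 0) := by
  intro x hx y hy hxy
  rcases eq_or_lt_of_le (Set.mem_Ici.1 hx) with rfl | hx
  · rcases eq_or_lt_of_le hxy with rfl | h
    · exact le_rfl
    · exact h0 y h
  · exact hf hx (hx.trans_le hxy) hxy

lemma apply_zero_le_of_tendsto {f : ℝ → ℝ} (hf : MonotoneOn f (Set.Ioi 0))
    (ht : Filter.Tendsto f (nhdsWithin 0 (Set.Ioi 0)) (nhds (f 0))) :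
    ∀ u, 0 < u → f 0 ≤ f u := by
  intro u hu
  refine le_of_tendsto ht ?_
  filter_upwards [Ioo_mem_nhdsGT hu] with x hx
  exact hf hx.1 hu hx.2.le

/-- Lowering the exponent preserves `s`-convexity in the first sense for a function nondecreasing
on `[0,∞)`. -/
lemma SConvexFirst.of_le {s s' : ℝ} (hs0 : 0 < s) (hle : s ≤ s') {f : ℝ → ℝ}
    (hf : SConvexFirst s' f) (hm : MonotoneOn f (Set.Ici 0)) : SConvexFirst s f := by
  intro u v l1 l2 hu hv h1 h2 hsum
  have hs'0 : 0 < s' := hs0.trans_le hle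
  -- `l ^ (s / s')` is the weight whose `s'`-th power is `l ^ s`; it dominates `l` on `[0,1]`.
  have hpow : ∀ l : ℝ, 0 ≤ l → (l ^ (s / s')) ^ s' = l ^ s := by
    intro l hl
    rw [← Real.rpow_mul hl, div_mul_cancel₀ _ hs'0.ne']
  have hdom : ∀ l : ℝ, 0 ≤ l → l ^ s ≤ 1 → l ≤ l ^ (s / s') := by
    intro l hl hl1
    have hl1' : l ≤ 1 := by
      by_contra! h
      exact absurd (Real.one_lt_rpow h hs0) (not_lt.2 hl1)
    exact Real.self_le_rpow_of_le_one hl hl1' ((div_le_one hs'0).2 hle)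
  have n1 := Real.rpow_nonneg h1 s
  have n2 := Real.rpow_nonneg h2 s
  have d1 := hdom l1 h1 (by linarith)
  have d2 := hdom l2 h2 (by linarith)
  have m1 := h1.trans d1
  have m2 := h2.trans d2
  have h := hf u v _ _ hu hv m1 m2 (by rw [hpow l1 h1, hpow l2 h2, hsum])
  rw [hpow l1 h1, hpow l2 h2] at h
  refine (hm ?_ ?_ ?_).trans h
  · exact Set.mem_Ici.2 (by positivity)
  · exact Set.mem_Ici.2 (by positivity)
  · gcongr

/-- By Chebyshev's inequality, `s`-convexity in the first sense passes to the product of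
nonnegative functions nondecreasing on `[0,∞)`. -/
lemma SConvexFirst.mul_of_monotoneOn {s : ℝ} {f g : ℝ → ℝ}
    (hf : SConvexFirst s f) (hg : SConvexFirst s g)
    (hf_nonneg : ∀ u : ℝ, 0 ≤ u → 0 ≤ f u) (hg_nonneg : ∀ u : ℝ, 0 ≤ u → 0 ≤ g u)
    (hfm : MonotoneOn f (Set.Ici 0)) (hgm : MonotoneOn g (Set.Ici 0)) :
    SConvexFirst s (f * g) := by
  intro u v l1 l2 hu hv h1 h2 hsum
  have hF := hf u v l1 l2 hu hv h1 h2 hsum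
  have hG := hg u v l1 l2 hu hv h1 h2 hsum
  have hw : 0 ≤ l1 * u + l2 * v := by positivity
  have hprod := mul_le_mul hF hG (hg_nonneg _ hw) ((hf_nonneg _ hw).trans hF)
  have hcheb : 0 ≤ (f u - f v) * (g u - g v) := by
    rcases le_total u v with h | h
    · exact mul_nonneg_of_nonpos_of_nonpos (sub_nonpos.2 (hfm hu hv h))
        (sub_nonpos.2 (hgm hu hv h))
    · exact mul_nonneg (sub_nonneg.2 (hfm hv hu h)) (sub_nonneg.2 (hgm hv hu h))
  have n1 := Real.rpow_nonneg h1 s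
  have n2 := Real.rpow_nonneg h2 s
  simp only [Pi.mul_apply]
  generalize l1 ^ s = a at *
  generalize l2 ^ s = b at *
  obtain rfl : b = 1 - a := by linarith
  refine hprod.trans ?_
  -- The two sides differ by `a b (f u - f v) (g u - g v)`.
  linarith [mul_nonneg (mul_nonneg n1 n2) hcheb]

/-- for `0 < s₁ < 1`, `0 < s₂ < 1` and `s = min s₁ s₂`, if `f`
is `s₁`-convex in the first sense and non-negative, `g` is `s₂`-convex in the
first sense and non-negative, and either (`f 0 = 0` and `g u → g 0` as
`u → 0⁺`) or (`g 0 = 0` and `f u → f 0` as `u → 0⁺`), then the product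
`f * g` is `min s₁ s₂`-convex in the first sense. -/
theorem sConvexFirst_mul {s₁ s₂ : ℝ} (hs₁0 : 0 < s₁) (hs₁1 : s₁ < 1)
    (hs₂0 : 0 < s₂) (hs₂1 : s₂ < 1)
    {f g : ℝ → ℝ} (hf : SConvexFirst s₁ f)
    (hf_nonneg : ∀ u : ℝ, 0 ≤ u → 0 ≤ f u)
    (hg : SConvexFirst s₂ g) (hg_nonneg : ∀ u : ℝ, 0 ≤ u → 0 ≤ g u)
    (hcase :
      (f 0 = 0 ∧ Filter.Tendsto g (nhdsWithin 0 (Set.Ioi 0)) (nhds (g 0))) ∨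
      (g 0 = 0 ∧ Filter.Tendsto f (nhdsWithin 0 (Set.Ioi 0)) (nhds (f 0)))) :
    SConvexFirst (min s₁ s₂) (f * g) := by
  have hfI := hf.monotoneOn_Ioi hs₁0 hs₁1
  have hgI := hg.monotoneOn_Ioi hs₂0 hs₂1
  have h0 : (∀ u, 0 < u → f 0 ≤ f u) ∧ (∀ u, 0 < u → g 0 ≤ g u) := by
    rcases hcase with ⟨h, ht⟩ | ⟨h, ht⟩
    · exact ⟨fun u hu => h.le.trans (hf_nonneg u hu.le), apply_zero_le_of_tendsto hgI ht⟩
    · exact ⟨apply_zero_le_of_tendsto hfI ht, fun u hu => h.le.trans (hg_nonneg u hu.le)⟩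
  have hfm := monotoneOn_Ici_of_Ioi hfI h0.1
  have hgm := monotoneOn_Ici_of_Ioi hgI h0.2
  have hs : 0 < min s₁ s₂ := lt_min hs₁0 hs₂0
  exact (hf.of_le hs (min_le_left _ _) hfm).mul_of_monotoneOn
    (hg.of_le hs (min_le_right _ _) hgm) hf_nonneg hg_nonneg hfm hgm
end

section
/- Let 0 < s < 1. If Φ : [0,∞) → ℝ is a convex φ-function (i.e., Φ(0) = 0, Φ is continuous, non-decreasing, non-negative and convex on [0,∞)) and g : [0,∞) → [0,∞) is a φ-function (g(0) = 0, g continuous and non-decreasing) that is s-convex in the first sense, then the composition Φ ∘ g is s-convex in the first sense. In particular, the function h(u) = Φ(u^s) is s-convex in the first sense. -/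
theorem SConvexFirst.comp_convex_mono {s : ℝ} {Φ g : ℝ → ℝ}
    (hmono : MonotoneOn Φ (Set.Ici 0)) (hconv : ConvexOn ℝ (Set.Ici 0) Φ)
    (hnonneg : ∀ u : ℝ, 0 ≤ u → 0 ≤ g u) (hg : SConvexFirst s g) :
    SConvexFirst s (Φ ∘ g) := by
  intro u v l1 l2 hu hv h1 h2 h
  have ha := Real.rpow_nonneg h1 s
  have hb := Real.rpow_nonneg h2 s
  have hgu := hnonneg u hu
  have hgv := hnonneg v hv
  calc Φ (g (l1 * u + l2 * v)) ≤ Φ (l1 ^ s * g u + l2 ^ s * g v) :=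
        hmono (hnonneg _ (by positivity)) (Set.mem_Ici.2 (by positivity))
          (hg u v l1 l2 hu hv h1 h2 h)
    _ ≤ l1 ^ s * Φ (g u) + l2 ^ s * Φ (g v) := hconv.2 hgu hgv ha hb h

theorem sConvexFirst_rpow {s : ℝ} (hs0 : 0 ≤ s) (hs1 : s ≤ 1) :
    SConvexFirst s (fun u => u ^ s) := by
  intro u v l1 l2 hu hv h1 h2 _
  have h := Real.rpow_add_le_add_rpow (mul_nonneg h1 hu) (mul_nonneg h2 hv) hs0 hs1
  rwa [Real.mul_rpow h1 hu, Real.mul_rpow h2 hv] at h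

/-- if `Φ` is a convex φ-function (`Φ 0 = 0`, continuous,
non-decreasing, non-negative and convex on `[0,∞)`) and `g : [0,∞) → [0,∞)`
is a φ-function that is `s`-convex in the first sense, then `Φ ∘ g` is
`s`-convex in the first sense; in particular `u ↦ Φ (u ^ s)` is `s`-convex
in the first sense. -/
theorem sConvexFirst_phi_comp {s : ℝ} (hs0 : 0 < s) (hs1 : s < 1)
    {Φ : ℝ → ℝ} (hΦ0 : Φ 0 = 0) (hΦcont : ContinuousOn Φ (Set.Ici 0))
    (hΦmono : MonotoneOn Φ (Set.Ici 0))
    (hΦnonneg : ∀ u : ℝ, 0 ≤ u → 0 ≤ Φ u)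
    (hΦconv : ConvexOn ℝ (Set.Ici 0) Φ)
    {g : ℝ → ℝ} (hg0 : g 0 = 0) (hgcont : ContinuousOn g (Set.Ici 0))
    (hgmono : MonotoneOn g (Set.Ici 0))
    (hgnonneg : ∀ u : ℝ, 0 ≤ u → 0 ≤ g u)
    (hg : SConvexFirst s g) :
    SConvexFirst s (Φ ∘ g) ∧ SConvexFirst s (fun u => Φ (u ^ s)) := by
  exact ⟨hg.comp_convex_mono hΦmono hΦconv hgnonneg,
    (sConvexFirst_rpow hs0.le hs1.le).comp_convex_mono hΦmono hΦconv
      fun u hu => Real.rpow_nonneg hu s⟩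
end

section
/- Let 0 < s < 1. If Φ : [0,∞) → [0,∞) is a convex φ-function (Φ(0) = 0, Φ continuous, non-decreasing, non-negative and convex on [0,∞)) and f : [0,∞) → ℝ is a φ-function (f(0) = 0, f continuous and non-decreasing) that is s-convex in the second sense, then the composition f ∘ Φ is s-convex in the second sense. In particular, the function h(u) = (Φ(u))^s is s-convex in the second sense. -/
theorem SConvexSecond.comp_convexOn {s : ℝ} {Φ f : ℝ → ℝ} (hf : SConvexSecond s f)
    (hfmono : MonotoneOn f (Set.Ici 0)) (hΦnonneg : ∀ u : ℝ, 0 ≤ u → 0 ≤ Φ u)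
    (hΦconv : ConvexOn ℝ (Set.Ici 0) Φ) : SConvexSecond s (f ∘ Φ) := by
  intro u v l1 l2 hu hv h1 h2 h
  have hu' := hΦnonneg u hu
  have hv' := hΦnonneg v hv
  have hconv : Φ (l1 * u + l2 * v) ≤ l1 * Φ u + l2 * Φ v := hΦconv.2 hu hv h1 h2 h
  exact (hfmono (hΦnonneg _ (by positivity))
    (show 0 ≤ l1 * Φ u + l2 * Φ v by positivity) hconv).trans
    (hf _ _ l1 l2 hu' hv' h1 h2 h)

theorem sConvexSecond_rpow {s : ℝ} (hs0 : 0 ≤ s) (hs1 : s ≤ 1) :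
    SConvexSecond s (fun x => x ^ s) := by
  intro u v l1 l2 hu hv h1 h2 _
  simpa only [Real.mul_rpow h1 hu, Real.mul_rpow h2 hv] using
    Real.rpow_add_le_add_rpow (mul_nonneg h1 hu) (mul_nonneg h2 hv) hs0 hs1

/-- if `Φ : [0,∞) → [0,∞)` is a convex φ-function (`Φ 0 = 0`,
continuous, non-decreasing, non-negative and convex on `[0,∞)`) and `f` is a
φ-function that is `s`-convex in the second sense, then `f ∘ Φ` is
`s`-convex in the second sense; in particular `u ↦ (Φ u) ^ s` is `s`-convex
in the second sense. -/
theorem sConvexSecond_comp_phi {s : ℝ} (hs0 : 0 < s) (hs1 : s < 1)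
    {Φ : ℝ → ℝ} (hΦ0 : Φ 0 = 0) (hΦcont : ContinuousOn Φ (Set.Ici 0))
    (hΦmono : MonotoneOn Φ (Set.Ici 0))
    (hΦnonneg : ∀ u : ℝ, 0 ≤ u → 0 ≤ Φ u)
    (hΦconv : ConvexOn ℝ (Set.Ici 0) Φ)
    {f : ℝ → ℝ} (hf0 : f 0 = 0) (hfcont : ContinuousOn f (Set.Ici 0))
    (hfmono : MonotoneOn f (Set.Ici 0))
    (hf : SConvexSecond s f) :
    SConvexSecond s (f ∘ Φ) ∧ SConvexSecond s (fun u => (Φ u) ^ s) := by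
  exact ⟨hf.comp_convexOn hfmono hΦnonneg hΦconv,
    (sConvexSecond_rpow hs0.le hs1.le).comp_convexOn
      (Real.monotoneOn_rpow_Ici_of_exponent_nonneg hs0.le) hΦnonneg hΦconv⟩
end

section
/- Let 0 < s < 1 and let f : [0,∞) → [0,∞) be a φ-function (f(0) = 0, f continuous, non-decreasing, non-negative) that is s-convex in the first sense. Then there exists a convex φ-function Φ : [0,∞) → [0,∞) (Φ(0) = 0, Φ continuous, non-decreasing and convex) such that f(2^(−1/s)·u) ≤ Φ(u^s) ≤ f(u) for all u ≥ 0. -/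
theorem integral_bounds_of_monotone {G : ℝ → ℝ} (hG : Monotone G) {a b : ℝ} (hab : a ≤ b) :
    (b - a) * G a ≤ ∫ t in a..b, G t ∧ ∫ t in a..b, G t ≤ (b - a) * G b := by
  constructor
  · have h := intervalIntegral.integral_mono_on hab
      (intervalIntegrable_const (c := G a) (μ := MeasureTheory.volume))
      hG.intervalIntegrable (fun x hx => hG hx.1)
    simpa using h
  · have h := intervalIntegral.integral_mono_on hab
      hG.intervalIntegrable
      (intervalIntegrable_const (c := G b) (μ := MeasureTheory.volume)) (fun x hx => hG hx.2)
    simpa using h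

theorem convexOn_primitive_of_monotone {G : ℝ → ℝ} (hG : Monotone G) :
    ConvexOn ℝ (Set.Ici 0) (fun u => ∫ t in (0 : ℝ)..u, G t) := by
  refine convexOn_of_slope_mono_adjacent (convex_Ici 0) ?_
  intro x y z _ _ hxy hyz
  rw [intervalIntegral.integral_interval_sub_left hG.intervalIntegrable hG.intervalIntegrable,
    intervalIntegral.integral_interval_sub_left hG.intervalIntegrable hG.intervalIntegrable]
  -- both adjacent slopes are compared with the value of `G` at the middle point
  trans G y
  · rw [div_le_iff₀ (sub_pos.2 hxy), mul_comm]
    exact (integral_bounds_of_monotone hG hxy.le).2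
  · rw [le_div_iff₀ (sub_pos.2 hyz), mul_comm]
    exact (integral_bounds_of_monotone hG hyz.le).1

/-- The integrand `t ↦ f (t ^ (1 / s)) / t`, extended by `0` to `t ≤ 0`. The truncation `max t 0`
makes it monotone on the whole line; at `t ≤ 0` the value is `0` because division by `0` is `0`. -/
noncomputable def gauge_aux (s : ℝ) (f : ℝ → ℝ) (t : ℝ) : ℝ :=
  f ((max t 0) ^ (1 / s)) / max t 0

theorem gauge_aux_of_nonpos (s : ℝ) (f : ℝ → ℝ) {t : ℝ} (ht : t ≤ 0) : gauge_aux s f t = 0 := by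
  simp [gauge_aux, max_eq_right ht]

theorem mul_gauge_aux {s : ℝ} (hs0 : 0 < s) {f : ℝ → ℝ} (hf0 : f 0 = 0) {t : ℝ} (ht : 0 ≤ t) :
    t * gauge_aux s f t = f (t ^ (1 / s)) := by
  rcases ht.eq_or_lt with rfl | h
  · rw [Real.zero_rpow (one_div_pos.2 hs0).ne', hf0, zero_mul]
  · rw [gauge_aux, max_eq_left ht, mul_div_cancel₀ _ h.ne']

theorem gauge_aux_nonneg {s : ℝ} {f : ℝ → ℝ} (hfnonneg : ∀ u : ℝ, 0 ≤ u → 0 ≤ f u) (t : ℝ) :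
    0 ≤ gauge_aux s f t :=
  div_nonneg (hfnonneg _ (Real.rpow_nonneg (le_max_right _ _) _)) (le_max_right _ _)

theorem gauge_monotone {s : ℝ} (hs0 : 0 < s) {f : ℝ → ℝ} (hf0 : f 0 = 0)
    (hfnonneg : ∀ u : ℝ, 0 ≤ u → 0 ≤ f u) (hf : SConvexFirst s f) :
    Monotone (gauge_aux s f) := by
  intro a b hab
  rcases le_or_gt a 0 with ha | ha
  · rw [gauge_aux_of_nonpos s f ha]
    exact gauge_aux_nonneg hfnonneg b
  have hb : 0 < b := ha.trans_le hab
  have hpow : ∀ {x : ℝ}, 0 ≤ x → (x ^ (1 / s)) ^ s = x := fun hx => by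
    rw [← Real.rpow_mul hx, one_div_mul_cancel hs0.ne', Real.rpow_one]
  have hr : 0 ≤ a / b := by positivity
  have hr1 : 0 ≤ 1 - a / b := sub_nonneg.2 ((div_le_one hb).2 hab)
  -- `s`-convexity with weights `a / b` and `1 - a / b` at the points `b ^ (1 / s)` and `0`
  have key := hf (b ^ (1 / s)) 0 ((a / b) ^ (1 / s)) ((1 - a / b) ^ (1 / s))
    (by positivity) le_rfl (by positivity) (Real.rpow_nonneg hr1 _)
    (by rw [hpow hr, hpow hr1]; ring)
  rw [hpow hr, hpow hr1, hf0, mul_zero, mul_zero, add_zero, add_zero,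
    ← Real.mul_rpow hr hb.le, div_mul_cancel₀ _ hb.ne'] at key
  rw [gauge_aux, gauge_aux, max_eq_left ha.le, max_eq_left hb.le, div_le_iff₀ ha]
  calc f (a ^ (1 / s)) ≤ a / b * f (b ^ (1 / s)) := key
    _ = f (b ^ (1 / s)) / b * a := by ring

/-- for `0 < s < 1` and a φ-function `f : [0,∞) → [0,∞)`
(`f 0 = 0`, continuous, non-decreasing, non-negative) that is `s`-convex in
the first sense, there exists a convex φ-function `Φ` such that
`f (2 ^ (-1/s) * u) ≤ Φ (u ^ s) ≤ f u` for all `u ≥ 0`. -/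
theorem sConvexFirst_sandwich_convex_phi {s : ℝ} (hs0 : 0 < s) (hs1 : s < 1)
    {f : ℝ → ℝ} (hf0 : f 0 = 0) (hfcont : ContinuousOn f (Set.Ici 0))
    (hfmono : MonotoneOn f (Set.Ici 0))
    (hfnonneg : ∀ u : ℝ, 0 ≤ u → 0 ≤ f u)
    (hf : SConvexFirst s f) :
    ∃ Φ : ℝ → ℝ, Φ 0 = 0 ∧ ContinuousOn Φ (Set.Ici 0) ∧
      MonotoneOn Φ (Set.Ici 0) ∧ (∀ u : ℝ, 0 ≤ u → 0 ≤ Φ u) ∧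
      ConvexOn ℝ (Set.Ici 0) Φ ∧
      ∀ u : ℝ, 0 ≤ u →
        f ((2 : ℝ) ^ (-(1 / s)) * u) ≤ Φ (u ^ s) ∧ Φ (u ^ s) ≤ f u := by
  have hG := gauge_monotone hs0 hf0 hfnonneg hf
  have hint : ∀ a b : ℝ, IntervalIntegrable (gauge_aux s f) MeasureTheory.volume a b :=
    fun a b => hG.intervalIntegrable
  have hnn := gauge_aux_nonneg (s := s) hfnonneg
  refine ⟨fun u => ∫ t in (0 : ℝ)..u, gauge_aux s f t, by simp,
    (intervalIntegral.continuous_primitive hint 0).continuousOn, ?_, ?_,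
    convexOn_primitive_of_monotone hG, ?_⟩
  · intro x _ y _ hxy
    have h := (integral_bounds_of_monotone hG hxy).1
    have h' := intervalIntegral.integral_add_adjacent_intervals (hint 0 x) (hint x y)
    have h'' := mul_nonneg (sub_nonneg.2 hxy) (hnn x)
    simp only
    linarith
  · exact fun u hu => intervalIntegral.integral_nonneg hu fun t _ => hnn t
  · intro u hu
    have hw : 0 ≤ u ^ s := Real.rpow_nonneg hu s
    have hus : (u ^ s) ^ (1 / s) = u := by
      rw [← Real.rpow_mul hu, mul_one_div_cancel hs0.ne', Real.rpow_one]
    constructor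
    · -- drop the integral over `[0, u ^ s / 2]` and bound the remaining one from below
      have hhalf : (u ^ s / 2) ^ (1 / s) = (2 : ℝ) ^ (-(1 / s)) * u := by
        rw [Real.div_rpow hw zero_le_two, hus, Real.rpow_neg zero_le_two, div_eq_inv_mul]
      have h1 : 0 ≤ ∫ t in (0 : ℝ)..(u ^ s / 2), gauge_aux s f t :=
        intervalIntegral.integral_nonneg (by positivity) fun t _ => hnn t
      have h2 := (integral_bounds_of_monotone hG (half_le_self hw)).1
      have h3 := intervalIntegral.integral_add_adjacent_intervals
        (hint 0 (u ^ s / 2)) (hint (u ^ s / 2) (u ^ s))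
      have h4 := mul_gauge_aux hs0 hf0 (by positivity : (0 : ℝ) ≤ u ^ s / 2)
      rw [sub_half, h4, hhalf] at h2
      simp only
      linarith
    · have h := (integral_bounds_of_monotone hG hw).2
      rwa [sub_zero, mul_gauge_aux hs0 hf0 hw, hus] at h
end

section
/- Let 0 < s < 1 and let a, b, c ∈ ℝ with b ≥ 0. Define f : [0,∞) → ℝ by f(0) = a and f(u) = b·u^s + c for u > 0. (i) If c ≤ a, then f is s-convex in the first sense. (ii) If in addition 0 ≤ c ≤ a, then f is s-convex in the second sense. -/
/-- The common core of both parts. The only properties of the weights that matter are that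
`l1 ^ s + l2 ^ s` does not decrease `a` and `c`, and that when one weight vanishes the other
has `s`-th power `1`. -/
lemma piecewise_rpow_le {s a b c u v l1 l2 : ℝ} (hs0 : 0 < s) (hs1 : s < 1) (hb : 0 ≤ b)
    (hca : c ≤ a) (hu : 0 ≤ u) (hv : 0 ≤ v) (h1 : 0 ≤ l1) (h2 : 0 ≤ l2)
    (hc : c ≤ (l1 ^ s + l2 ^ s) * c) (ha : a ≤ (l1 ^ s + l2 ^ s) * a)
    (h10 : l1 = 0 → l2 ^ s = 1) (h20 : l2 = 0 → l1 ^ s = 1) :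
    (if l1 * u + l2 * v = 0 then a else b * (l1 * u + l2 * v) ^ s + c) ≤
      l1 ^ s * (if u = 0 then a else b * u ^ s + c) +
        l2 ^ s * (if v = 0 then a else b * v ^ s + c) := by
  have z : (0 : ℝ) ^ s = 0 := Real.zero_rpow hs0.ne'
  have hle : ∀ x : ℝ, b * x ^ s + c ≤ if x = 0 then a else b * x ^ s + c := by
    intro x
    split_ifs with hx
    · simpa [hx, z] using hca
    · exact le_rfl
  by_cases hw : l1 * u + l2 * v = 0
  · rw [if_pos hw]
    obtain ⟨e1, e2⟩ := (add_eq_zero_iff_of_nonneg (mul_nonneg h1 hu) (mul_nonneg h2 hv)).1 hw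
    rcases mul_eq_zero.1 e1 with r1 | r1
    · have hL := h10 r1
      rcases mul_eq_zero.1 e2 with r2 | r2
      · rw [r2, z] at hL
        exact absurd hL zero_ne_one
      · simp [r1, r2, z, hL]
    · rcases mul_eq_zero.1 e2 with r2 | r2
      · simp [r1, r2, z, h20 r2]
      · rw [if_pos r1, if_pos r2, ← add_mul]
        exact ha
  · rw [if_neg hw]
    have hsub := Real.rpow_add_le_add_rpow (mul_nonneg h1 hu) (mul_nonneg h2 hv) hs0.le hs1.le
    rw [Real.mul_rpow h1 hu, Real.mul_rpow h2 hv] at hsub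
    calc b * (l1 * u + l2 * v) ^ s + c
        ≤ b * (l1 ^ s * u ^ s + l2 ^ s * v ^ s) + (l1 ^ s + l2 ^ s) * c :=
          add_le_add (mul_le_mul_of_nonneg_left hsub hb) hc
      _ = l1 ^ s * (b * u ^ s + c) + l2 ^ s * (b * v ^ s + c) := by ring
      _ ≤ _ := add_le_add
          (mul_le_mul_of_nonneg_left (hle u) (Real.rpow_nonneg h1 s))
          (mul_le_mul_of_nonneg_left (hle v) (Real.rpow_nonneg h2 s))

/-- for `0 < s < 1`, `b ≥ 0`, and `f` defined by `f 0 = a` and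
`f u = b * u ^ s + c` for `u > 0`: (i) if `c ≤ a` then `f` is `s`-convex in
the first sense; (ii) if moreover `0 ≤ c ≤ a` then `f` is `s`-convex in the
second sense. -/
theorem sConvex_piecewise_rpow {s : ℝ} (hs0 : 0 < s) (hs1 : s < 1)
    (a b c : ℝ) (hb : 0 ≤ b) :
    (c ≤ a → SConvexFirst s (fun u => if u = 0 then a else b * u ^ s + c)) ∧
    (0 ≤ c → c ≤ a →
      SConvexSecond s (fun u => if u = 0 then a else b * u ^ s + c)) := by
  refine ⟨fun hca u v l1 l2 hu hv h1 h2 h => ?_, fun hc hca u v l1 l2 hu hv h1 h2 h => ?_⟩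
  · refine piecewise_rpow_le hs0 hs1 hb hca hu hv h1 h2 (by rw [h, one_mul])
      (by rw [h, one_mul]) (fun e => ?_) (fun e => ?_)
    · simpa [e, Real.zero_rpow hs0.ne'] using h
    · simpa [e, Real.zero_rpow hs0.ne'] using h
  · have hL : 1 ≤ l1 ^ s + l2 ^ s := by
      simpa [h] using Real.rpow_add_le_add_rpow h1 h2 hs0.le hs1.le
    refine piecewise_rpow_le hs0 hs1 hb hca hu hv h1 h2 (le_mul_of_one_le_left hc hL)
      (le_mul_of_one_le_left (hc.trans hca) hL) (fun e => ?_) (fun e => ?_)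
    · rw [show l2 = 1 by linarith, Real.one_rpow]
    · rw [show l1 = 1 by linarith, Real.one_rpow]
end

section
/- Let 0 < s < 1 and k > 1. Define f : [0,∞) → ℝ by f(u) = u^(s/(1−s)) for 0 ≤ u ≤ 1 and f(u) = k·u^(s/(1−s)) for u > 1. Then f is s-convex in the first sense but f is NOT s-convex in the second sense. -/
lemma le_one_of_rpow_le_one {x s : ℝ} (hs : 0 < s) (h : x ^ s ≤ 1) : x ≤ 1 := by
  by_contra! hx
  exact absurd (Real.one_lt_rpow hx hs) (not_lt.2 h)

/-- The key estimate: a weighted combination of `u` and `v` that exceeds `v` is at most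
`l1 ^ (1 - s) * u`. -/
lemma weighted_le_rpow_mul {s u v l1 l2 : ℝ} (hs0 : 0 < s) (hs1 : s < 1) (hu : 0 ≤ u)
    (h1 : 0 ≤ l1) (h2 : 0 ≤ l2) (h : l1 ^ s + l2 ^ s = 1) (hw : v < l1 * u + l2 * v) :
    l1 ^ (1 - s) * u ≥ l1 * u + l2 * v := by
  have ha : 0 ≤ l1 ^ s := Real.rpow_nonneg h1 s
  have hb : l2 ^ s ≤ 1 := by linarith
  have hl2 : l2 ≤ 1 := le_one_of_rpow_le_one hs0 hb
  have hlb : l2 ≤ l2 ^ s := Real.self_le_rpow_of_le_one h2 hl2 hs1.le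
  have hlt : l2 < 1 := by
    refine lt_of_le_of_ne hl2 ?_
    rintro rfl
    have h0 : l1 ^ s = 0 := by rw [Real.one_rpow] at h; linarith
    have : l1 = 0 := (Real.rpow_eq_zero h1 hs0.ne').1 h0
    subst this
    linarith
  have hsplit : l1 = l1 ^ (1 - s) * l1 ^ s := by
    rw [← Real.rpow_add_of_nonneg h1 (by linarith) hs0.le]; simp
  have hc : 0 ≤ l1 ^ (1 - s) := Real.rpow_nonneg h1 _
  have e1 : (l1 * u + l2 * v) * (1 - l2) ≤ l1 * u := by nlinarith
  have e2 : l1 * u ≤ l1 ^ (1 - s) * u * (1 - l2) := by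
    calc l1 * u = l1 ^ (1 - s) * u * l1 ^ s := by
          nth_rewrite 1 [hsplit]; ring
      _ ≤ _ := mul_le_mul_of_nonneg_left (by linarith) (mul_nonneg hc hu)
  exact le_of_mul_le_mul_right (e1.trans e2) (by linarith)

lemma step_rpow_nonneg {k p u : ℝ} (hk : 1 < k) (hu : 0 ≤ u) :
    0 ≤ (if u ≤ 1 then u ^ p else k * u ^ p) := by
  have := Real.rpow_nonneg hu p
  split_ifs <;> positivity

/-- Domination `w ^ p ≤ c * u ^ p` of powers passes to the step-weighted powers when `w ≤ u`,
because the step factor is nondecreasing. -/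
lemma step_rpow_le {k p w u c : ℝ} (hk : 1 < k) (hw : 0 ≤ w) (hwu : w ≤ u)
    (h : w ^ p ≤ c * u ^ p) :
    (if w ≤ 1 then w ^ p else k * w ^ p) ≤ c * (if u ≤ 1 then u ^ p else k * u ^ p) := by
  have := Real.rpow_nonneg hw p
  split_ifs
  · exact h
  · nlinarith
  · linarith
  · nlinarith

/-- The inequality defining `s`-convexity in the first sense, for ordered points `v ≤ u`. -/
lemma step_first_of_le {s k u v l1 l2 : ℝ} (hs0 : 0 < s) (hs1 : s < 1) (hk : 1 < k)
    (hv : 0 ≤ v) (hvu : v ≤ u) (h1 : 0 ≤ l1) (h2 : 0 ≤ l2) (h : l1 ^ s + l2 ^ s = 1)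
    {f : ℝ → ℝ}
    (hf : f = fun u => if u ≤ 1 then u ^ (s / (1 - s)) else k * u ^ (s / (1 - s))) :
    f (l1 * u + l2 * v) ≤ l1 ^ s * f u + l2 ^ s * f v := by
  have hu : 0 ≤ u := hv.trans hvu
  have hp : 0 < s / (1 - s) := div_pos hs0 (by linarith)
  have ha : 0 ≤ l1 ^ s := Real.rpow_nonneg h1 s
  have hb : 0 ≤ l2 ^ s := Real.rpow_nonneg h2 s
  have hw : 0 ≤ l1 * u + l2 * v := by positivity
  have mono : ∀ x y : ℝ, 0 ≤ x → x ≤ y → f x ≤ f y := by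
    intro x y hx hxy
    have := step_rpow_le (c := 1) (p := s / (1 - s)) hk hx hxy
      (by rw [one_mul]; exact Real.rpow_le_rpow hx hxy hp.le)
    simpa [hf] using this
  have hfv : 0 ≤ f v := by rw [hf]; exact step_rpow_nonneg hk hv
  rcases le_or_gt (l1 * u + l2 * v) v with hwv | hwv
  · have e1 := mono _ _ hw hwv
    have e2 := mul_le_mul_of_nonneg_left (mono _ _ hv hvu) ha
    have e3 : l1 ^ s * f v + l2 ^ s * f v = f v := by rw [← add_mul, h, one_mul]
    linarith
  · have key := weighted_le_rpow_mul hs0 hs1 hu h1 h2 h hwv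
    have hl1 : l1 ≤ 1 := le_one_of_rpow_le_one hs0 (by linarith)
    have hc0 : 0 ≤ l1 ^ (1 - s) := Real.rpow_nonneg h1 _
    have hc1 : l1 ^ (1 - s) ≤ 1 := Real.rpow_le_one h1 hl1 (by linarith)
    have hwu : l1 * u + l2 * v ≤ u := key.le.trans (mul_le_of_le_one_left hu hc1)
    have hpow : (l1 * u + l2 * v) ^ (s / (1 - s)) ≤ l1 ^ s * u ^ (s / (1 - s)) := by
      have e := Real.rpow_le_rpow hw key.le hp.le
      rwa [Real.mul_rpow hc0 hu, ← Real.rpow_mul h1,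
        mul_div_cancel₀ s (by linarith : (1 - s) ≠ 0)] at e
    have e := step_rpow_le hk hw hwu hpow
    have e' : f (l1 * u + l2 * v) ≤ l1 ^ s * f u := by rw [hf]; exact e
    nlinarith [mul_nonneg hb hfv]

/-- for `0 < s < 1` and `k > 1`, the function equal to
`u ^ (s/(1-s))` on `[0,1]` and to `k * u ^ (s/(1-s))` for `u > 1` is
`s`-convex in the first sense but not in the second sense. -/
theorem sConvexFirst_not_sConvexSecond {s k : ℝ} (hs0 : 0 < s) (hs1 : s < 1)
    (hk : 1 < k) :
    SConvexFirst s
        (fun u => if u ≤ 1 then u ^ (s / (1 - s)) else k * u ^ (s / (1 - s)))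
      ∧ ¬ SConvexSecond s
        (fun u => if u ≤ 1 then u ^ (s / (1 - s)) else k * u ^ (s / (1 - s))) := by
  constructor
  · intro u v l1 l2 hu hv h1 h2 h
    rcases le_total v u with hvu | huv
    · exact step_first_of_le hs0 hs1 hk hv hvu h1 h2 h rfl
    · have := step_first_of_le hs0 hs1 hk hu huv h2 h1 (by rwa [add_comm]) rfl
      rw [add_comm (l1 * u), add_comm (l1 ^ s * _)]
      exact this
  · intro H
    have hp : 0 < s / (1 - s) := div_pos hs0 (by linarith)
    have h2p : 1 < (2 : ℝ) ^ (s / (1 - s)) := Real.one_lt_rpow (by norm_num) hp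
    set P := (2 : ℝ) ^ (s / (1 - s)) with hP
    have hkP : 0 < k * P := by positivity
    have hq0 : 0 < (k - 1) / (k * P) := div_pos (by linarith) hkP
    have hq1 : (k - 1) / (k * P) ≤ 1 := (div_le_one hkP).2 (by nlinarith)
    -- The weight `t` solves `t ^ s * (k * 2 ^ p) = k - 1`.
    obtain ⟨t, ht0, ht1, hts⟩ : ∃ t : ℝ, 0 < t ∧ t ≤ 1 ∧ t ^ s = (k - 1) / (k * P) :=
      ⟨((k - 1) / (k * P)) ^ s⁻¹, Real.rpow_pos_of_pos hq0 _,
        Real.rpow_le_one hq0.le hq1 (inv_nonneg.2 hs0.le), Real.rpow_inv_rpow hq0.le hs0.ne'⟩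
    have h := H 2 1 t (1 - t) (by norm_num) (by norm_num) ht0.le (by linarith) (by ring)
    have hw : t * 2 + (1 - t) = 1 + t := by ring
    have hb : (1 - t) ^ s ≤ 1 := Real.rpow_le_one (by linarith) (by linarith) hs0.le
    have hbig : 1 < (1 + t) ^ (s / (1 - s)) := Real.one_lt_rpow (by linarith) hp
    have hmul : t ^ s * (k * P) = k - 1 := by rw [hts]; exact div_mul_cancel₀ _ hkP.ne'
    simp only [mul_one, hw, if_neg (by linarith : ¬ (1 + t ≤ 1)), if_neg (by norm_num : ¬ ((2 : ℝ) ≤ 1)),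
      le_refl, if_true, Real.one_rpow, ← hP, hmul] at h
    nlinarith
end
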